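/- Let m ≥ 2, let B = {z ∈ ℂ^m : ‖z‖ < 1} be the unit ball and S = {z ∈ ℂ^m : ‖z‖ = 1} the unit sphere. Let U ⊆ ℂ^m be a connected open set with U ∩ S ≠ ∅ and let F : U → ℂ^m be a nonconstant holomorphic map with F(U ∩ S) ⊆ S. Then there exists a biholomorphism G : B → B (an automorphism of the unit ball) such that G coincides with F on some nonempty open subset of U ∩ B. -/

import Mathlib

noncomputable section

open Set Metric

/-- `Biholo f s t`: `f` is a biholomorphism from `s` onto `t`, i.e. `f` is holomorphic
on `s`, maps `s` into `t`, and has a holomorphic inverse from `t` onto `s`. -/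
def Biholo {E F : Type*} [NormedAddCommGroup E] [NormedSpace ℂ E]
    [NormedAddCommGroup F] [NormedSpace ℂ F]
    (f : E → F) (s : Set E) (t : Set F) : Prop :=
  DifferentiableOn ℂ f s ∧ Set.MapsTo f s t ∧
    ∃ g : F → E, DifferentiableOn ℂ g t ∧ Set.MapsTo g t s ∧
      Set.LeftInvOn g f s ∧ Set.RightInvOn g f t

/-!
Polarizing the condition `‖F z‖ = 1` on the sphere gives `⟪F z, F w⟫ = 1` for all `z`, `w` near a
point `p` of the sphere with `⟪z, w⟫ = 1`, so `F` maps polar hyperplanes (Segre varieties) into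
polar hyperplanes. If the normal derivative `⟪F p, DF_p p⟫` vanished all along the sphere, then
`DF_z` would be `⟪z, ·⟫ • DF_z z` on the sphere; polarizing this too forces `DF = 0`. Where it
does not vanish, comparing Levi forms makes `DF_p` invertible, and differentiating the polarized
identity along the polar hyperplane of `w` solves for `F` there as a projective map. Such
hyperplanes sweep out an open cone of lines through `p`; on each of these lines the second
derivative of `F` at `p` determines the denominator, so the denominators fit together into one
affine function and `F` is projective near `p`. Its linear lift to `ℂ × E` multiplies the Lorentzian
form by a positive constant, hence induces an automorphism of the ball.
-/

open Topology Filter ComplexConjugate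
open scoped InnerProductSpace

/-! ### Holomorphic maps on normed spaces -/

section SeveralVariables

variable {E G : Type*} [NormedAddCommGroup E] [NormedSpace ℂ E]
  [NormedAddCommGroup G] [NormedSpace ℂ G] {U : Set E} {f g : E → G} {x : E}

theorem hasDerivAt_add_smul (a b : E) (t : ℂ) : HasDerivAt (fun t : ℂ ↦ a + t • b) b t := by
  simpa using ((hasDerivAt_id t).smul_const b).const_add a

theorem hasDerivAt_comp_add_smul {a b : E} {t : ℂ} (hf : DifferentiableAt ℂ f (a + t • b)) :
    HasDerivAt (fun t : ℂ ↦ f (a + t • b)) (fderiv ℂ f (a + t • b) b) t :=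
  hf.hasFDerivAt.comp_hasDerivAt t (hasDerivAt_add_smul a b t)

theorem hasDerivAt_comp_add_smul_zero {a : E} (hf : DifferentiableAt ℂ f a) (b : E) :
    HasDerivAt (fun t : ℂ ↦ f (a + t • b)) (fderiv ℂ f a b) 0 := by
  simpa using hasDerivAt_comp_add_smul (f := f) (b := b) (t := 0) (by simpa using hf)

theorem tendsto_add_smul_zero (a b : E) : Tendsto (fun t : ℂ ↦ a + t • b) (𝓝 0) (𝓝 a) :=
  Continuous.tendsto' (by fun_prop) 0 a (by simp)

theorem eqOn_of_convex_of_eventuallyEq [CompleteSpace G] (hU : IsOpen U) (hc : Convex ℝ U)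
    (hf : DifferentiableOn ℂ f U) (hg : DifferentiableOn ℂ g U) (hx : x ∈ U) (h : f =ᶠ[𝓝 x] g) :
    EqOn f g U := by
  intro y hy
  let l : ℂ → E := fun t ↦ x + t • (y - x)
  have hl : Differentiable ℂ l := fun t ↦ (hasDerivAt_add_smul x (y - x) t).differentiableAt
  have hlU : IsOpen (l ⁻¹' U) := hU.preimage hl.continuous
  have hlc : Convex ℝ (l ⁻¹' U) := (hc.translate_preimage_right x).linear_preimage
    ((LinearMap.toSpanSingleton ℂ E (y - x)).restrictScalars ℝ)
  have hcomp : ∀ {k : E → G}, DifferentiableOn ℂ k U → AnalyticOnNhd ℂ (k ∘ l) (l ⁻¹' U) :=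
    fun hk ↦ (hk.comp hl.differentiableOn fun _ ht ↦ ht).analyticOnNhd hlU
  simpa [l] using (hcomp hf).eqOn_of_preconnected_of_eventuallyEq (hcomp hg) hlc.isPreconnected
    (show (0 : ℂ) ∈ l ⁻¹' U by simpa [l] using hx) ((tendsto_add_smul_zero x _).eventually h)
    (show (1 : ℂ) ∈ l ⁻¹' U by simpa [l] using hy)

theorem eqOn_of_isPreconnected_of_eventuallyEq [CompleteSpace G] (hU : IsOpen U)
    (hc : IsPreconnected U) (hf : DifferentiableOn ℂ f U) (hg : DifferentiableOn ℂ g U)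
    (hx : x ∈ U) (h : f =ᶠ[𝓝 x] g) : EqOn f g U := by
  have hopen : IsOpen {y | f =ᶠ[𝓝 y] g} := isOpen_setOfPred_eventually_nhds
  have hsub : U ⊆ {y | f =ᶠ[𝓝 y] g} := by
    refine hc.subset_of_closure_inter_subset hopen ⟨x, hx, h⟩ fun y ⟨hyc, hyU⟩ ↦ ?_
    obtain ⟨r, hr, hrU⟩ := Metric.isOpen_iff.1 hU y hyU
    obtain ⟨z, hzr, hz⟩ := mem_closure_iff.1 hyc _ isOpen_ball (mem_ball_self hr)
    exact (eqOn_of_convex_of_eventuallyEq isOpen_ball (convex_ball y r) (hf.mono hrU)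
      (hg.mono hrU) hzr hz).eventuallyEq_of_mem (ball_mem_nhds y hr)
  exact fun y hy ↦ (hsub hy).self_of_nhds

theorem exists_eventually_norm_fderiv_le (hU : IsOpen U) (hf : DifferentiableOn ℂ f U)
    (hx : x ∈ U) : ∃ C, ∀ᶠ z in 𝓝 x, ‖fderiv ℂ f z‖ ≤ C := by
  have hcont : ContinuousAt f x := hf.continuousOn.continuousAt (hU.mem_nhds hx)
  obtain ⟨r, hr, hball⟩ := Metric.eventually_nhds_iff_ball.1
    ((hU.eventually_mem hx).and (hcont (ball_mem_nhds (f x) one_pos)))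
  refine ⟨2 / (r / 2), ?_⟩
  filter_upwards [ball_mem_nhds x (half_pos hr)] with z hz
  have hsub : ball z (r / 2) ⊆ ball x r := ball_subset_ball' (by linarith [mem_ball.1 hz])
  refine Complex.norm_fderiv_le_div_of_mapsTo_ball (hf.mono fun y hy ↦ (hball y (hsub hy)).1)
    (fun y hy ↦ ?_) (half_pos hr)
  have hy1 : dist (f y) (f x) < 1 := (hball y (hsub hy)).2
  have hz1 : dist (f z) (f x) < 1 := (hball z (hsub (mem_ball_self (half_pos hr)))).2
  exact mem_closedBall.2 (by linarith [dist_triangle_right (f y) (f z) (f x)])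

theorem fderiv_apply_eq_circleIntegral [CompleteSpace G] (hU : IsOpen U)
    (hf : DifferentiableOn ℂ f U) {v : E} {s : ℝ} (hs : 0 < s)
    (hmem : ∀ t ∈ closedBall (0 : ℂ) s, x + t • v ∈ U) :
    fderiv ℂ f x v = (2 * Real.pi * Complex.I : ℂ)⁻¹ •
      ∮ t in C(0, s), ((t - 0) ^ 2)⁻¹ • f (x + t • v) := by
  have hx : x + (0 : ℂ) • v ∈ U := hmem 0 (mem_closedBall_self hs.le)
  have hderiv := hasDerivAt_comp_add_smul (hf.differentiableAt (hU.mem_nhds hx))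
  have hl : Continuous fun t : ℂ ↦ x + t • v := by fun_prop
  have hCauchy := Complex.two_pi_I_inv_smul_circleIntegral_sub_sq_inv_smul_of_differentiable
    (hU.preimage hl) hmem (hf.comp (by fun_prop) fun _ ht ↦ ht) (mem_ball_self hs)
  simpa [Function.comp_def] using (hCauchy.trans hderiv.deriv).symm

theorem differentiableAt_integral_smul_comp_add [FiniteDimensional ℂ E] [FiniteDimensional ℂ G]
    (hf : ∀ z ∈ U, DifferentiableAt ℂ f z) {C : ℝ} (hC : ∀ z ∈ U, ‖fderiv ℂ f z‖ ≤ C)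
    {k : ℝ → ℂ} (hk : Continuous k) {γ : ℝ → E} (hγ : Continuous γ)
    (hγU : ∀ᶠ z in 𝓝 x, ∀ θ, z + γ θ ∈ U) (a b : ℝ) :
    DifferentiableAt ℂ (fun z ↦ ∫ θ in a..b, k θ • f (z + γ θ)) x := by
  let _ : MeasurableSpace E := borel E
  have : BorelSpace E := ⟨rfl⟩
  have : CompleteSpace G := FiniteDimensional.complete ℂ G
  have : ProperSpace (E →L[ℂ] G) := FiniteDimensional.proper ℂ _
  have hcont : ∀ᶠ z in 𝓝 x, Continuous fun θ ↦ k θ • f (z + γ θ) := by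
    filter_upwards [hγU] with z hz
    exact hk.smul (continuous_iff_continuousAt.2 fun θ ↦
      (hf _ (hz θ)).continuousAt.comp (f := fun θ ↦ z + γ θ) (by fun_prop))
  refine (intervalIntegral.hasFDerivAt_integral_of_dominated_of_fderiv_le
    (F' := fun z θ ↦ k θ • fderiv ℂ f (z + γ θ)) (bound := fun θ ↦ ‖k θ‖ * C) hγU
    ?_ ?_ ?_ ?_ ?_ ?_).differentiableAt
  · exact hcont.mono fun z hz ↦ hz.aestronglyMeasurable
  · exact hcont.self_of_nhds.intervalIntegrable _ _
  · exact hk.aestronglyMeasurable.smul ((measurable_fderiv ℂ f).comp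
      (continuous_const.add hγ).measurable).aestronglyMeasurable
  · exact Eventually.of_forall fun θ _ z hz ↦
      (norm_smul_le _ _).trans (mul_le_mul_of_nonneg_left (hC _ (hz θ)) (norm_nonneg _))
  · exact (hk.norm.mul continuous_const).intervalIntegrable _ _
  · exact Eventually.of_forall fun θ _ z hz ↦
      ((hasFDerivAt_comp_add_right _).2 (hf _ (hz θ)).hasFDerivAt).const_smul (k θ)

theorem differentiableAt_fderiv_apply [FiniteDimensional ℂ E] [FiniteDimensional ℂ G]
    (hU : IsOpen U) (hf : DifferentiableOn ℂ f U) (v : E) (hx : x ∈ U) :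
    DifferentiableAt ℂ (fun z ↦ fderiv ℂ f z v) x := by
  have : CompleteSpace G := FiniteDimensional.complete ℂ G
  obtain ⟨C, hC⟩ := exists_eventually_norm_fderiv_le hU hf hx
  obtain ⟨V, hVbound, hV, hxV⟩ := _root_.eventually_nhds_iff.1 (hC.and (hU.eventually_mem hx))
  obtain ⟨s, hs, hsV⟩ : ∃ s > 0, ∀ᶠ z in 𝓝 x, ∀ t ∈ closedBall (0 : ℂ) s, z + t • v ∈ V := by
    have hlim : Tendsto (fun y : E × ℂ ↦ y.1 + y.2 • v) (𝓝 x ×ˢ 𝓝 0) (𝓝 x) := by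
      rw [← nhds_prod_eq]
      exact Continuous.tendsto' (by fun_prop) _ _ (by simp)
    obtain ⟨P, hP, Q, hQ, hPQ⟩ := eventually_prod_iff.1 (hlim.eventually (hV.mem_nhds hxV))
    obtain ⟨s, hs, hsQ⟩ := nhds_basis_closedBall.eventually_iff.1 hQ
    exact ⟨s, hs, hP.mono fun z hz t ht ↦ hPQ hz (hsQ ht)⟩
  have hCauchy : (fun z ↦ fderiv ℂ f z v) =ᶠ[𝓝 x] fun z ↦ (2 * Real.pi * Complex.I : ℂ)⁻¹ •
      ∮ t in C(0, s), ((t - 0) ^ 2)⁻¹ • f (z + t • v) :=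
    hsV.mono fun z hz ↦ fderiv_apply_eq_circleIntegral hV
      (hf.mono fun y hy ↦ (hVbound y hy).2) hs hz
  refine DifferentiableAt.congr_of_eventuallyEq (.const_smul ?_ _) hCauchy
  have hk : Continuous fun θ ↦ deriv (circleMap 0 s) θ * ((circleMap 0 s θ - 0) ^ 2)⁻¹ := by
    simp only [deriv_circleMap, sub_zero]
    exact .mul (by fun_prop) (.inv₀ (by fun_prop) fun θ ↦
      pow_ne_zero 2 (circleMap_ne_center hs.ne'))
  simpa only [circleIntegral, smul_smul] using differentiableAt_integral_smul_comp_add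
    (fun z hz ↦ hf.differentiableAt (hU.mem_nhds (hVbound z hz).2))
    (fun z hz ↦ (hVbound z hz).1) hk (γ := fun θ ↦ circleMap 0 s θ • v) (by fun_prop)
    (hsV.mono fun z hz θ ↦ hz _ (sphere_subset_closedBall (circleMap_mem_sphere 0 hs.le θ)))
    0 (2 * Real.pi)

theorem differentiableOn_clm_of_apply {𝕜 D E F : Type*} [NontriviallyNormedField 𝕜]
    [CompleteSpace 𝕜] [NormedAddCommGroup D] [NormedSpace 𝕜 D] [NormedAddCommGroup E]
    [NormedSpace 𝕜 E] [FiniteDimensional 𝕜 E] [NormedAddCommGroup F] [NormedSpace 𝕜 F]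
    {f : D → E →L[𝕜] F} {s : Set D} (h : ∀ v, DifferentiableOn 𝕜 (fun x ↦ f x v) s) :
    DifferentiableOn 𝕜 f s := by
  let e₁ : E ≃L[𝕜] (Fin (Module.finrank 𝕜 E) → 𝕜) :=
    ContinuousLinearEquiv.ofFinrankEq (Module.finrank_fin_fun 𝕜).symm
  let e₂ := (e₁.arrowCongr (1 : F ≃L[𝕜] F)).trans (ContinuousLinearEquiv.piRing _)
  rw [← Function.id_comp f, ← e₂.symm_comp_self]
  exact e₂.symm.differentiable.comp_differentiableOn (differentiableOn_pi.2 fun i ↦ h _)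

theorem differentiableOn_fderiv [FiniteDimensional ℂ E] [FiniteDimensional ℂ G]
    (hU : IsOpen U) (hf : DifferentiableOn ℂ f U) : DifferentiableOn ℂ (fderiv ℂ f) U :=
  differentiableOn_clm_of_apply fun v _ hx ↦
    (differentiableAt_fderiv_apply hU hf v hx).differentiableWithinAt

end SeveralVariables

/-! ### Polarization along the sphere -/

section Polarization

variable {E : Type*} [NormedAddCommGroup E] [InnerProductSpace ℂ E]

/-- The holomorphic function of `t` extending `t ↦ ‖a + t • b‖ ^ 2` from real to complex `t`. -/
def lineNormSq (a b : E) (t : ℂ) : ℂ := ⟪a + conj t • b, a + t • b⟫_ℂ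

theorem lineNormSq_eq (a b : E) (t : ℂ) :
    lineNormSq a b t = ⟪a, a⟫_ℂ + t * (⟪a, b⟫_ℂ + ⟪b, a⟫_ℂ) + t ^ 2 * ⟪b, b⟫_ℂ := by
  simp only [lineNormSq, inner_add_left, inner_add_right, inner_smul_left, inner_smul_right,
    Complex.conj_conj]
  ring

theorem lineNormSq_ofReal (a b : E) (s : ℝ) : lineNormSq a b s = (‖a + (s : ℂ) • b‖ : ℂ) ^ 2 := by
  rw [lineNormSq, Complex.conj_ofReal, inner_self_eq_norm_sq_to_K]
  rfl

/-- The point `a + t • b` rescaled by a holomorphic factor that puts it on the unit sphere for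
real `t`. It is holomorphic only where `lineNormSq a b` avoids the branch cut of the power. -/
def sphereCurve (a b : E) (t : ℂ) : E := lineNormSq a b t ^ (-(1 / 2) : ℂ) • (a + t • b)

theorem sphereCurve_eq_of_lineNormSq_eq_one {a b : E} {t : ℂ} (h : lineNormSq a b t = 1) :
    sphereCurve a b t = a + t • b := by
  rw [sphereCurve, h, Complex.one_cpow, one_smul]

theorem norm_sphereCurve_ofReal {a b : E} {s : ℝ} (h : a + (s : ℂ) • b ≠ 0) :
    ‖sphereCurve a b s‖ = 1 := by
  have hpos : 0 < ‖a + (s : ℂ) • b‖ := norm_pos_iff.2 h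
  have hre : (-(1 / 2) : ℂ).re = -(1 / 2 : ℝ) := by simp
  rw [sphereCurve, norm_smul, lineNormSq_ofReal, ← Complex.ofReal_pow,
    Complex.norm_cpow_eq_rpow_re_of_pos (pow_pos hpos 2), hre, Real.rpow_neg (sq_nonneg _),
    ← Real.sqrt_eq_rpow, Real.sqrt_sq hpos.le, inv_mul_cancel₀ hpos.ne']

theorem differentiableAt_sphereCurve {a b : E} {t : ℂ}
    (h : lineNormSq a b t ∈ Complex.slitPlane) : DifferentiableAt ℂ (sphereCurve a b) t := by
  have hq : DifferentiableAt ℂ (lineNormSq a b) t := by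
    simp only [funext (lineNormSq_eq a b)]
    fun_prop
  exact (hq.cpow_const h).smul (hasDerivAt_add_smul a b t).differentiableAt

theorem eventually_forall_sphereCurve_mem {p : E} (hp : ‖p‖ = 1) {U : Set E} (hU : U ∈ 𝓝 p)
    (R : ℝ) : ∀ᶠ ab : E × E in 𝓝 (p, 0), ∀ t ∈ closedBall (0 : ℂ) R,
      lineNormSq ab.1 ab.2 t ∈ Complex.slitPlane ∧ sphereCurve ab.1 ab.2 t ∈ U := by
  refine (isCompact_closedBall (0 : ℂ) R).eventually_forall_of_forall_eventually
    (P := fun (ab : E × E) t ↦ lineNormSq ab.1 ab.2 t ∈ Complex.slitPlane ∧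
      sphereCurve ab.1 ab.2 t ∈ U) fun t _ ↦ ?_
  have hone : lineNormSq p 0 t = 1 := by simp [lineNormSq_eq, inner_self_eq_norm_sq_to_K, hp]
  have hslit : lineNormSq p 0 t ∈ Complex.slitPlane := hone ▸ Complex.one_mem_slitPlane
  have hq : Continuous fun x : (E × E) × ℂ ↦ lineNormSq x.1.1 x.1.2 x.2 := by
    unfold lineNormSq
    fun_prop
  have hs : ContinuousAt (fun x : (E × E) × ℂ ↦ sphereCurve x.1.1 x.1.2 x.2) ((p, 0), t) :=
    (hq.continuousAt.cpow continuousAt_const hslit).smul (by fun_prop)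
  refine (hq.continuousAt.eventually (Complex.isOpen_slitPlane.mem_nhds hslit)).and
    (hs.eventually (eventually_mem_set.2 ?_))
  simpa only [sphereCurve_eq_of_lineNormSq_eq_one hone, smul_zero, add_zero] using hU

/-- The disc `γ` complexifies a real analytic curve in the sphere. Conjugating the parameter
exchanges the two given points, so identities along the curve polarize. -/
theorem eventually_exists_sphere_disc {p : E} (hp : ‖p‖ = 1) {U : Set E} (hU : U ∈ 𝓝 p) :
    ∀ᶠ x : E × E in 𝓝 (p, p), ⟪x.2, x.1⟫_ℂ = 1 → ∃ γ : ℂ → E,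
      DifferentiableOn ℂ γ (ball 0 2) ∧ MapsTo γ (ball 0 2) U ∧
      (∀ s : ℝ, (s : ℂ) ∈ ball (0 : ℂ) 2 → ‖γ s‖ = 1) ∧
      γ Complex.I = x.1 ∧ γ (-Complex.I) = x.2 := by
  have hlim : Tendsto (fun x : E × E ↦ ((1 / 2 : ℂ) • (x.1 + x.2), (-Complex.I / 2) • (x.1 - x.2)))
      (𝓝 (p, p)) (𝓝 (p, 0)) :=
    Continuous.tendsto' (by fun_prop) _ _ (Prod.ext (by module) (by simp))
  filter_upwards [hlim.eventually (eventually_forall_sphereCurve_mem hp hU 2)]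
  rintro ⟨z, w⟩ hab hwz
  set a : E := (1 / 2 : ℂ) • (z + w) with ha
  set b : E := (-Complex.I / 2) • (z - w) with hb
  have hIb : Complex.I • b = (1 / 2 : ℂ) • (z - w) := by
    rw [hb, smul_smul]
    congr 1
    linear_combination (-1 / 2 : ℂ) * Complex.I_sq
  have hz : a + Complex.I • b = z := by rw [ha, hIb]; module
  have hw : a + (-Complex.I) • b = w := by rw [ha, neg_smul, hIb]; module
  have hzw : ⟪z, w⟫_ℂ = 1 := by rw [← inner_conj_symm, hwz, map_one]
  refine ⟨sphereCurve a b, fun t ht ↦ ?_, fun t ht ↦ (hab t (ball_subset_closedBall ht)).2,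
    fun s hs ↦ norm_sphereCurve_ofReal fun h0 ↦ ?_, ?_, ?_⟩
  · exact (differentiableAt_sphereCurve
      (hab t (ball_subset_closedBall ht)).1).differentiableWithinAt
  · have hslit := (hab s (ball_subset_closedBall hs)).1
    rw [lineNormSq_ofReal, h0] at hslit
    simp at hslit
  · rw [sphereCurve_eq_of_lineNormSq_eq_one, hz]
    rw [lineNormSq, Complex.conj_I, hz, hw, hwz]
  · rw [sphereCurve_eq_of_lineNormSq_eq_one, hw]
    rw [lineNormSq, map_neg, Complex.conj_I, neg_neg, hz, hw, hzw]

theorem eqOn_of_eqOn_ofReal {G : Type*} [NormedAddCommGroup G] [NormedSpace ℂ G] [CompleteSpace G]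
    {U : Set ℂ} (hU : IsOpen U) (hc : IsPreconnected U) {f g : ℂ → G}
    (hf : DifferentiableOn ℂ f U) (hg : DifferentiableOn ℂ g U) {x : ℝ} (hx : (x : ℂ) ∈ U)
    (h : ∀ s : ℝ, (s : ℂ) ∈ U → f s = g s) : EqOn f g U := by
  refine (hf.analyticOnNhd hU).eqOn_of_preconnected_of_frequently_eq (hg.analyticOnNhd hU) hc hx ?_
  have hlim : Tendsto ((↑) : ℝ → ℂ) (𝓝[≠] x) (𝓝[≠] (x : ℂ)) :=
    tendsto_nhdsWithin_iff.2 ⟨Complex.continuous_ofReal.continuousAt.mono_left nhdsWithin_le_nhds,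
      eventually_mem_nhdsWithin.mono fun s hs ↦ Complex.ofReal_injective.ne hs⟩
  have hmem : ∀ᶠ s : ℝ in 𝓝[≠] x, (s : ℂ) ∈ U :=
    hlim.eventually (nhdsWithin_le_nhds (hU.mem_nhds hx))
  exact hlim.frequently (hmem.mono h).frequently

theorem eventually_polarization {G₁ G₂ H : Type*} [NormedAddCommGroup G₁] [NormedSpace ℂ G₁]
    [NormedAddCommGroup G₂] [NormedSpace ℂ G₂] [NormedAddCommGroup H] [NormedSpace ℂ H]
    [CompleteSpace H] (P : G₂ →L⋆[ℂ] G₁ →L[ℂ] H) {U : Set E} (hU : IsOpen U) {p : E} (hpU : p ∈ U)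
    (hp : ‖p‖ = 1) {f : E → G₁} {g : E → G₂} {h : E → H} (hf : DifferentiableOn ℂ f U)
    (hg : DifferentiableOn ℂ g U) (hh : DifferentiableOn ℂ h U)
    (hS : ∀ z ∈ U, ‖z‖ = 1 → P (g z) (f z) = h z) :
    ∀ᶠ x : E × E in 𝓝 (p, p), ⟪x.2, x.1⟫_ℂ = 1 → P (g x.2) (f x.1) = h x.1 := by
  filter_upwards [eventually_exists_sphere_disc hp (hU.mem_nhds hpU)]
  rintro ⟨z, w⟩ hdisc hwz
  obtain ⟨γ, hγ, hγU, hγS, hγI, hγI'⟩ := hdisc hwz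
  have hconj : DifferentiableOn ℂ (P ∘ (g ∘ γ) ∘ conj) (ball 0 2) := fun t ht ↦ by
    have ht' : conj t ∈ ball (0 : ℂ) 2 := by simpa using ht
    simpa only [Complex.conj_conj] using (((hg.comp hγ hγU).differentiableAt
      (isOpen_ball.mem_nhds ht')).comp_semilinear₁ (starRingEnd ℂ) P).differentiableWithinAt
  have hI := eqOn_of_eqOn_ofReal isOpen_ball (convex_ball (0 : ℂ) 2).isPreconnected
    (hconj.clm_apply (hf.comp hγ hγU)) (hh.comp hγ hγU) (x := 0) (by simp)
    (fun s hs ↦ by simpa using hS _ (hγU hs) (hγS s hs))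
    (show Complex.I ∈ ball (0 : ℂ) 2 by simp)
  simpa [hγI, hγI'] using hI

end Polarization

/-! ### Maps preserving polarity with respect to the sphere -/

section Polarity

variable {E E' : Type*} [NormedAddCommGroup E] [InnerProductSpace ℂ E] [NormedAddCommGroup E']
  [InnerProductSpace ℂ E'] {F : E → E'} {B U : Set E} {p z w u v : E}

/-- `F` respects the relation `⟪z, w⟫ = 1` (each of `z`, `w` lies on the polar hyperplane of the
other with respect to the unit sphere) between points of `B`. -/
def PreservesPolarity (F : E → E') (B : Set E) : Prop :=
  ∀ z ∈ B, ∀ w ∈ B, ⟪z, w⟫_ℂ = 1 → ⟪F z, F w⟫_ℂ = 1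

theorem PreservesPolarity.mono {B' : Set E} (hF : PreservesPolarity F B) (h : B' ⊆ B) :
    PreservesPolarity F B' :=
  fun z hz w hw ↦ hF z (h hz) w (h hw)

theorem inner_self_eq_one (hp : ‖p‖ = 1) : ⟪p, p⟫_ℂ = 1 := by
  rw [inner_self_eq_norm_sq_to_K, hp]
  norm_num

theorem exists_preservesPolarity (hU : IsOpen U) (hpU : p ∈ U) (hp : ‖p‖ = 1)
    (hF : DifferentiableOn ℂ F U) (hS : ∀ z ∈ U, ‖z‖ = 1 → ‖F z‖ = 1) :
    ∃ ε > 0, PreservesPolarity F (ball p ε) := by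
  have hpolar := eventually_polarization (innerSL ℂ) hU hpU hp hF hF (differentiableOn_const 1)
    fun z hz hz1 ↦ inner_self_eq_one (hS z hz hz1)
  obtain ⟨ε, hε, hball⟩ := Metric.eventually_nhds_iff_ball.1 hpolar
  refine ⟨ε, hε, fun z hz w hw hzw ↦ hball (w, z) ?_ hzw⟩
  rw [← ball_prod_same]
  exact ⟨hw, hz⟩

theorem PreservesPolarity.inner_fderiv_eq_zero (hF : PreservesPolarity F B) (hB : B ∈ 𝓝 z)
    (hd : DifferentiableAt ℂ F z) (hw : w ∈ B) (hwz : ⟪w, z⟫_ℂ = 1) (hwu : ⟪w, u⟫_ℂ = 0) :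
    ⟪F w, fderiv ℂ F z u⟫_ℂ = 0 := by
  have hderiv : HasDerivAt (fun t : ℂ ↦ ⟪F w, F (z + t • u)⟫_ℂ) ⟪F w, fderiv ℂ F z u⟫_ℂ 0 :=
    (innerSL ℂ (F w)).hasFDerivAt.comp_hasDerivAt 0 (hasDerivAt_comp_add_smul_zero hd u)
  refine hderiv.unique ((hasDerivAt_const (0 : ℂ) (1 : ℂ)).congr_of_eventuallyEq ?_)
  filter_upwards [(tendsto_add_smul_zero z u).eventually hB] with t ht
  exact hF w hw _ ht (by rw [inner_add_right, inner_smul_right, hwz, hwu, mul_zero, add_zero])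

theorem PreservesPolarity.inner_fderiv (hF : PreservesPolarity F B) (hB : B ∈ 𝓝 z)
    (hd : DifferentiableAt ℂ F z) (hw : w ∈ B) (hwz : ⟪w, z⟫_ℂ = 1) (u : E) :
    ⟪F w, fderiv ℂ F z u⟫_ℂ = ⟪w, u⟫_ℂ * ⟪F w, fderiv ℂ F z z⟫_ℂ := by
  have h := hF.inner_fderiv_eq_zero hB hd hw hwz (u := u - ⟪w, u⟫_ℂ • z)
    (by rw [inner_sub_right, inner_smul_right, hwz, mul_one, sub_self])
  rwa [map_sub, map_smul, inner_sub_right, inner_smul_right, sub_eq_zero] at h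

/-- This compares the Levi forms of the source and target spheres. -/
theorem PreservesPolarity.inner_fderiv_fderiv (hF : PreservesPolarity F B) (hB : B ∈ 𝓝 p)
    (hd : DifferentiableAt ℂ F p) (hp : ‖p‖ = 1) (hu : ⟪p, u⟫_ℂ = 0) (hv : ⟪p, v⟫_ℂ = 0) :
    ⟪fderiv ℂ F p u, fderiv ℂ F p v⟫_ℂ = ⟪u, v⟫_ℂ * ⟪F p, fderiv ℂ F p p⟫_ℂ := by
  have hinner : ∀ x, HasDerivAt (fun t : ℂ ↦ ⟪x, F (p + t • u)⟫_ℂ) ⟪x, fderiv ℂ F p u⟫_ℂ 0 :=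
    fun x ↦ (innerSL ℂ x).hasFDerivAt.comp_hasDerivAt 0 (hasDerivAt_comp_add_smul_zero hd u)
  have hev : (fun t : ℂ ↦ ⟪fderiv ℂ F p v, F (p + t • u)⟫_ℂ) =ᶠ[𝓝 0]
      fun t ↦ t * ⟪v, u⟫_ℂ * ⟪fderiv ℂ F p p, F (p + t • u)⟫_ℂ := by
    filter_upwards [(tendsto_add_smul_zero p u).eventually hB] with t ht
    have h := hF.inner_fderiv hB hd ht
      (by rw [inner_add_left, inner_smul_left, inner_eq_zero_symm.1 hu, mul_zero, add_zero,
        inner_self_eq_one hp]) v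
    rw [← inner_conj_symm, h, map_mul, inner_conj_symm, inner_conj_symm, inner_add_right,
      inner_smul_right, inner_eq_zero_symm.1 hv, zero_add]
  have h := (hinner _).unique ((((hasDerivAt_id (0 : ℂ)).mul_const _).mul
    (hinner _)).congr_of_eventuallyEq hev)
  simp only [id_eq, zero_mul, add_zero, one_mul, zero_smul] at h
  rw [← inner_conj_symm, h, map_mul, inner_conj_symm, inner_conj_symm]

end Polarity

/-! ### Nondegeneracy of the normal derivative -/

section Nondegeneracy

variable {E E' : Type*} [NormedAddCommGroup E] [InnerProductSpace ℂ E] [NormedAddCommGroup E']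
  [InnerProductSpace ℂ E'] {F : E → E'} {U : Set E} {p : E}

theorem exists_ne_zero_inner_eq_zero (hdim : 1 < Module.rank ℂ E) (z : E) :
    ∃ v : E, v ≠ 0 ∧ ⟪z, v⟫_ℂ = 0 := by
  by_contra! h
  have hinj : Function.Injective (innerSL ℂ z : E →L[ℂ] ℂ).toLinearMap :=
    (injective_iff_map_eq_zero _).2 fun v hv ↦ by_contra fun hv0 ↦ h v hv0 hv
  have hle := LinearMap.lift_rank_le_of_injective _ hinj
  rw [Module.rank_self, Cardinal.lift_one, Cardinal.lift_le_one_iff] at hle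
  exact hle.not_gt hdim

theorem inner_inv_smul_self_add {z u : E} (hz : z ≠ 0) (hzu : ⟪z, u⟫_ℂ = 0) (s : ℂ) :
    ⟪(⟪z, z⟫_ℂ)⁻¹ • z + s • u, z⟫_ℂ = 1 := by
  rw [inner_add_left, inner_smul_left, inner_smul_left, inner_eq_zero_symm.1 hzu, mul_zero,
    add_zero, map_inv₀, inner_conj_symm, inv_mul_cancel₀ (inner_self_ne_zero.2 hz)]

theorem eventually_forall_eventually_inv_smul_self_add (hp : ‖p‖ = 1) {Q : E × E → Prop}
    (hQ : ∀ᶠ x in 𝓝 (p, p), Q x) :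
    ∀ᶠ z in 𝓝 p, ∀ u, ∀ᶠ s : ℂ in 𝓝 0, Q (z, (⟪z, z⟫_ℂ)⁻¹ • z + s • u) := by
  have hpp : ⟪p, p⟫_ℂ = 1 := inner_self_eq_one hp
  have hlim : ContinuousAt (fun z : E ↦ (z, (⟪z, z⟫_ℂ)⁻¹ • z)) p :=
    continuousAt_id.prodMk (((by fun_prop : ContinuousAt (fun z : E ↦ ⟪z, z⟫_ℂ) p).inv₀
      (hpp ▸ one_ne_zero)).smul continuousAt_id)
  rw [ContinuousAt, hpp, inv_one, one_smul] at hlim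
  filter_upwards [hlim.eventually hQ.eventually_nhds] with z hz u
  exact (Continuous.tendsto' (f := fun s : ℂ ↦ (z, (⟪z, z⟫_ℂ)⁻¹ • z + s • u)) (by fun_prop) 0 _
    (by simp)).eventually hz

theorem fderiv_eq_smulRight_of_inner_fderiv_eq_zero (hU : IsOpen U) (hpU : p ∈ U) (hp : ‖p‖ = 1)
    (hF : DifferentiableOn ℂ F U) (hS : ∀ z ∈ U, ‖z‖ = 1 → ‖F z‖ = 1)
    (h0 : ⟪F p, fderiv ℂ F p p⟫_ℂ = 0) :
    fderiv ℂ F p = (innerSL ℂ p).smulRight (fderiv ℂ F p p) := by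
  obtain ⟨ε, hε, hpolar⟩ := exists_preservesPolarity hU hpU hp hF hS
  ext a
  have hort : ⟪p, a - ⟪p, a⟫_ℂ • p⟫_ℂ = 0 := by
    rw [inner_sub_right, inner_smul_right, inner_self_eq_one hp, mul_one, sub_self]
  have hself := hpolar.inner_fderiv_fderiv (ball_mem_nhds p hε)
    (hF.differentiableAt (hU.mem_nhds hpU)) hp hort hort
  rw [h0, mul_zero, inner_self_eq_zero, map_sub, map_smul, sub_eq_zero] at hself
  simpa using hself

theorem PreservesPolarity.exists_pos_inner_fderiv {B : Set E} (hF : PreservesPolarity F B)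
    (hB : B ∈ 𝓝 p) (hd : DifferentiableAt ℂ F p) (hp : ‖p‖ = 1) (hdim : 1 < Module.rank ℂ E)
    (h0 : ⟪F p, fderiv ℂ F p p⟫_ℂ ≠ 0) : ∃ α : ℝ, 0 < α ∧ ⟪F p, fderiv ℂ F p p⟫_ℂ = α := by
  obtain ⟨v, hv0, hpv⟩ := exists_ne_zero_inner_eq_zero hdim p
  have hlevi := hF.inner_fderiv_fderiv hB hd hp hpv hpv
  rw [inner_self_eq_norm_sq_to_K, inner_self_eq_norm_sq_to_K, mul_comm] at hlevi
  have heq : ⟪F p, fderiv ℂ F p p⟫_ℂ = (‖fderiv ℂ F p v‖ ^ 2 / ‖v‖ ^ 2 : ℝ) := by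
    push_cast
    exact eq_div_of_mul_eq (by simpa using hv0) hlevi.symm
  refine ⟨_, lt_of_le_of_ne (by positivity) fun h ↦ h0 ?_, heq⟩
  rw [heq, ← h, Complex.ofReal_zero]

theorem PreservesPolarity.injective_fderiv {B : Set E} (hF : PreservesPolarity F B)
    (hB : B ∈ 𝓝 p) (hd : DifferentiableAt ℂ F p) (hp : ‖p‖ = 1)
    (h0 : ⟪F p, fderiv ℂ F p p⟫_ℂ ≠ 0) : Function.Injective (fderiv ℂ F p) := by
  refine (injective_iff_map_eq_zero _).2 fun u hu ↦ ?_
  have hpu : ⟪p, u⟫_ℂ = 0 := by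
    have h := hF.inner_fderiv hB hd (mem_of_mem_nhds hB) (inner_self_eq_one hp) u
    rw [hu, inner_zero_right] at h
    exact (mul_eq_zero.1 h.symm).resolve_right h0
  have hlevi := hF.inner_fderiv_fderiv hB hd hp hpu hpu
  rw [hu, inner_zero_right] at hlevi
  exact inner_self_eq_zero.1 ((mul_eq_zero.1 hlevi.symm).resolve_right h0)

variable [FiniteDimensional ℂ E]

theorem eventually_isInvertible_fderiv {F : E → E} {U : Set E} {p : E} (hU : IsOpen U)
    (hpU : p ∈ U) (hF : DifferentiableOn ℂ F U) (hinj : Function.Injective (fderiv ℂ F p)) :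
    ∀ᶠ w in 𝓝 p, (fderiv ℂ F w).IsInvertible :=
  ((differentiableOn_fderiv hU hF).continuousOn.continuousAt (hU.mem_nhds hpU)).eventually
    (ContinuousLinearEquiv.isOpen.mem_nhds
      ⟨(LinearEquiv.ofInjectiveEndo (fderiv ℂ F p).toLinearMap hinj).toContinuousLinearEquiv, rfl⟩)

variable [FiniteDimensional ℂ E']

theorem eventually_fderiv_eq_zero (hdim : 1 < Module.rank ℂ E) (hU : IsOpen U) (hpU : p ∈ U)
    (hp : ‖p‖ = 1) (hF : DifferentiableOn ℂ F U) (hS : ∀ z ∈ U, ‖z‖ = 1 → ‖F z‖ = 1)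
    (h0 : ∀ z ∈ U, ‖z‖ = 1 → ⟪F z, fderiv ℂ F z z⟫_ℂ = 0) : ∀ᶠ z in 𝓝 p, fderiv ℂ F z = 0 := by
  have : CompleteSpace E' := FiniteDimensional.complete ℂ E'
  have hF' : DifferentiableOn ℂ (fderiv ℂ F) U := differentiableOn_fderiv hU hF
  have hrank := eventually_polarization
    ((ContinuousLinearMap.smulRightL ℂ E E').comp (innerSL ℂ)) hU hpU hp
    (hF'.clm_apply differentiableOn_id) differentiableOn_id hF'
    fun z hz hz1 ↦ (fderiv_eq_smulRight_of_inner_fderiv_eq_zero hU hz hz1 hF hS (h0 z hz hz1)).symm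
  filter_upwards [eventually_forall_eventually_inv_smul_self_add hp hrank,
    isOpen_ne.mem_nhds (norm_ne_zero_iff.1 (hp ▸ one_ne_zero) : p ≠ 0)] with z hz hz0
  obtain ⟨u, hu, hzu⟩ := exists_ne_zero_inner_eq_zero hdim z
  have hrel : ∀ᶠ s : ℂ in 𝓝 0, ∀ a,
      fderiv ℂ F z a = ⟪(⟪z, z⟫_ℂ)⁻¹ • z + s • u, a⟫_ℂ • fderiv ℂ F z z := by
    filter_upwards [hz u] with s hs a
    exact (DFunLike.congr_fun (hs (inner_inv_smul_self_add hz0 hzu s)) a).symm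
  have hrelu : ∀ᶠ s : ℂ in 𝓝 0, fderiv ℂ F z u = (conj s * ⟪u, u⟫_ℂ) • fderiv ℂ F z z := by
    filter_upwards [hrel] with s hs
    rw [hs u, inner_add_left, inner_smul_left, inner_smul_left, hzu, mul_zero, zero_add]
  have hu0 : fderiv ℂ F z u = 0 := by simpa using hrelu.self_of_nhds
  obtain ⟨s, hs, hs0⟩ := ((hrelu.filter_mono nhdsWithin_le_nhds).and
    (eventually_mem_nhdsWithin (a := (0 : ℂ)) (s := {0}ᶜ))).exists
  have hz0' : fderiv ℂ F z z = 0 := by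
    refine (smul_eq_zero.1 (hs.symm.trans hu0)).resolve_left (mul_ne_zero ?_ ?_)
    · exact (map_ne_zero _).2 hs0
    · exact inner_self_ne_zero.2 hu
  ext a
  rw [hrel.self_of_nhds a, hz0', smul_zero, zero_apply]

theorem exists_inner_fderiv_ne_zero (hdim : 1 < Module.rank ℂ E) (hU : IsOpen U)
    (hc : IsPreconnected U) (hpU : p ∈ U) (hp : ‖p‖ = 1) (hF : DifferentiableOn ℂ F U)
    (hFnc : ¬ ∃ c, EqOn F (fun _ ↦ c) U) (hS : ∀ z ∈ U, ‖z‖ = 1 → ‖F z‖ = 1) :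
    ∃ z ∈ U, ‖z‖ = 1 ∧ ⟪F z, fderiv ℂ F z z⟫_ℂ ≠ 0 := by
  by_contra! h0
  have : CompleteSpace E' := FiniteDimensional.complete ℂ E'
  have hzero : EqOn (fderiv ℂ F) 0 U := eqOn_of_isPreconnected_of_eventuallyEq hU hc
    (differentiableOn_fderiv hU hF) (differentiableOn_const 0) hpU
    (eventually_fderiv_eq_zero hdim hU hpU hp hF hS h0)
  exact hFnc (hU.exists_is_const_of_fderiv_eq_zero hc hF hzero)

end Nondegeneracy

/-! ### Projective linearity -/

section LineFormula

variable {E G : Type*} [NormedAddCommGroup E] [NormedSpace ℂ E] [NormedAddCommGroup G]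
  [NormedSpace ℂ G] {F : E → G} {p v : E} {c : ℂ} {x : G}

theorem hasDerivAt_one_add_mul (c t : ℂ) : HasDerivAt (fun t : ℂ ↦ 1 + t * c) c t := by
  simpa using ((hasDerivAt_id t).mul_const c).const_add 1

theorem eventually_smul_fderiv_add_of_projective (hF : ∀ᶠ z in 𝓝 p, DifferentiableAt ℂ F z)
    (h : ∀ᶠ t : ℂ in 𝓝 0, (1 + t * c) • (F (p + t • v) - F p) = t • x) :
    ∀ᶠ t : ℂ in 𝓝 0, (1 + t * c) • fderiv ℂ F (p + t • v) v + c • (F (p + t • v) - F p) = x := by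
  filter_upwards [h.eventually_nhds, (tendsto_add_smul_zero p v).eventually hF] with t ht hd
  have hright : HasDerivAt (fun t : ℂ ↦ t • x) x t := by
    simpa using (hasDerivAt_id t).smul_const x
  exact ((hasDerivAt_one_add_mul c t).smul
    ((hasDerivAt_comp_add_smul hd).sub_const (F p))).unique (hright.congr_of_eventuallyEq ht)

theorem fderiv_apply_of_projective (hF : ∀ᶠ z in 𝓝 p, DifferentiableAt ℂ F z)
    (h : ∀ᶠ t : ℂ in 𝓝 0, (1 + t * c) • (F (p + t • v) - F p) = t • x) :
    fderiv ℂ F p v = x := by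
  simpa using (eventually_smul_fderiv_add_of_projective hF h).self_of_nhds

theorem fderiv_fderiv_apply_of_projective (hF : ∀ᶠ z in 𝓝 p, DifferentiableAt ℂ F z)
    (hF' : DifferentiableAt ℂ (fderiv ℂ F) p)
    (h : ∀ᶠ t : ℂ in 𝓝 0, (1 + t * c) • (F (p + t • v) - F p) = t • x) :
    fderiv ℂ (fderiv ℂ F) p v v = (-2 * c) • x := by
  have hfirst := fderiv_apply_of_projective hF h
  have hsecond : HasDerivAt (fun t : ℂ ↦ fderiv ℂ F (p + t • v) v)
      (fderiv ℂ (fderiv ℂ F) p v v) 0 :=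
    (ContinuousLinearMap.apply ℂ G v).hasFDerivAt.comp_hasDerivAt 0
      (hasDerivAt_comp_add_smul_zero hF' v)
  have hzero := (((hasDerivAt_one_add_mul c 0).smul hsecond).add
    (((hasDerivAt_comp_add_smul_zero hF.self_of_nhds v).sub_const (F p)).const_smul c)).unique
    ((hasDerivAt_const (0 : ℂ) x).congr_of_eventuallyEq
      (eventually_smul_fderiv_add_of_projective hF h))
  simp only [zero_mul, add_zero, one_smul, zero_smul, hfirst] at hzero
  linear_combination (norm := module) hzero

end LineFormula

section QuadraticMap

variable {K V : Type*} [Field K] [AddCommGroup V] [Module K V]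

theorem map_smul_of_quadraticMap_eq_smul {Q : QuadraticMap K V V} {l : V → K} (h0 : l 0 = 0)
    (hl : ∀ v, Q v = l v • v) (a : K) (v : V) : l (a • v) = a * l v := by
  rcases eq_or_ne (a • v) 0 with hav | hav
  · rw [hav, h0]
    rcases smul_eq_zero.1 hav with rfl | rfl
    · rw [zero_mul]
    · rw [h0, mul_zero]
  · refine smul_left_injective K hav ?_
    simp only [← hl, QuadraticMap.map_smul, smul_smul]
    rw [hl, smul_smul]
    ring_nf

variable [NeZero (2 : K)]

theorem map_add_of_quadraticMap_eq_smul {Q : QuadraticMap K V V} {l : V → K} (h0 : l 0 = 0)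
    (hl : ∀ v, Q v = l v • v) (u v : V) : l (u + v) = l u + l v := by
  have hsmul := map_smul_of_quadraticMap_eq_smul h0 hl
  by_cases hind : LinearIndependent K ![v, u]
  · have hsum : (l (u + v) - l (u - v) - 2 * l v) • v
        + (l (u + v) + l (u - v) - 2 * l u) • u = 0 := by
      have hneg : l (-v) = -l v := by simpa using hsmul (-1) v
      have h := Q.polar_neg_right u v
      simp only [QuadraticMap.polar, ← sub_eq_add_neg, hl, hneg] at h
      linear_combination (norm := module) h
    obtain ⟨hv, hu⟩ := LinearIndependent.pair_iff.1 hind _ _ hsum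
    refine mul_left_cancel₀ (two_ne_zero' K) ?_
    linear_combination hv + hu
  · rcases eq_or_ne v 0 with rfl | hv
    · rw [add_zero, h0, add_zero]
    · rw [LinearIndependent.pair_iff' hv] at hind
      push Not at hind
      obtain ⟨a, rfl⟩ := hind
      rw [hsmul, ← add_one_mul, ← hsmul, add_smul, one_smul]

theorem exists_dual_of_quadraticMap_mem_span {Q : QuadraticMap K V V}
    (h : ∀ v, Q v ∈ Submodule.span K {v}) : ∃ l : Module.Dual K V, ∀ v, Q v = l v • v := by
  have hcoeff : ∀ v, ∃ c : K, Q v = c • v ∧ (v = 0 → c = 0) := by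
    intro v
    rcases eq_or_ne v 0 with rfl | hv
    · exact ⟨0, by simp, fun _ ↦ rfl⟩
    · obtain ⟨c, hc⟩ := Submodule.mem_span_singleton.1 (h v)
      exact ⟨c, hc.symm, fun h ↦ absurd h hv⟩
  choose l hl h0 using hcoeff
  exact ⟨{ toFun := l
           map_add' := map_add_of_quadraticMap_eq_smul (h0 0 rfl) hl
           map_smul' := map_smul_of_quadraticMap_eq_smul (h0 0 rfl) hl }, hl⟩

end QuadraticMap

section Projective

variable {E : Type*} [NormedAddCommGroup E] [InnerProductSpace ℂ E]

theorem mem_span_singleton_of_eventually {Q : E → E} (hQ : Differentiable ℂ Q) {v₀ : E}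
    (h : ∀ᶠ v in 𝓝 v₀, Q v ∈ Submodule.span ℂ {v}) {v : E} (hv : v ≠ 0) :
    Q v ∈ Submodule.span ℂ {v} := by
  have hinner : ∀ (x : E) {f : E → E}, Differentiable ℂ f → Differentiable ℂ fun v ↦ ⟪x, f v⟫_ℂ :=
    fun x _ hf ↦ (innerSL ℂ x).differentiable.comp hf
  have hprop : ∀ x y, ⟪x, v⟫_ℂ * ⟪y, Q v⟫_ℂ = ⟪y, v⟫_ℂ * ⟪x, Q v⟫_ℂ := by
    intro x y
    refine eqOn_of_isPreconnected_of_eventuallyEq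
      (f := fun v ↦ ⟪x, v⟫_ℂ * ⟪y, Q v⟫_ℂ) (g := fun v ↦ ⟪y, v⟫_ℂ * ⟪x, Q v⟫_ℂ)
      isOpen_univ isPreconnected_univ
      ((hinner x differentiable_id).mul (hinner y hQ)).differentiableOn
      ((hinner y differentiable_id).mul (hinner x hQ)).differentiableOn (mem_univ v₀) ?_
      (mem_univ v)
    filter_upwards [h] with u hu
    obtain ⟨c, hc⟩ := Submodule.mem_span_singleton.1 hu
    simp only [← hc, inner_smul_right]
    ring
  refine Submodule.mem_span_singleton.2 ⟨⟪v, Q v⟫_ℂ / ⟪v, v⟫_ℂ, ext_inner_left ℂ fun y ↦ ?_⟩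
  rw [inner_smul_right, div_mul_eq_mul_div, div_eq_iff (inner_self_ne_zero.2 hv)]
  linear_combination hprop y v

theorem exists_dual_of_eventually_mem_span {G : Type*} [NormedAddCommGroup G] [NormedSpace ℂ G]
    [FiniteDimensional ℂ E] {A : E →L[ℂ] G} (hA : A.IsInvertible) {D : E →L[ℂ] E →L[ℂ] G} {v₀ : E}
    (h : ∀ᶠ v in 𝓝 v₀, D v v ∈ Submodule.span ℂ {A v}) :
    ∃ l : E →L[ℂ] ℂ, ∀ v, D v v = l v • A v := by
  let Q : QuadraticMap ℂ E E := (A.inverse.toLinearMap).compQuadraticMap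
    (LinearMap.BilinMap.toQuadraticMap D.toLinearMap₁₂)
  have hspan : ∀ v, Q v ∈ Submodule.span ℂ {v} := by
    intro v
    rcases eq_or_ne v 0 with rfl | hv
    · rw [QuadraticMap.map_zero]
      exact zero_mem _
    · refine mem_span_singleton_of_eventually (v₀ := v₀)
        (A.inverse.differentiable.comp (D.differentiable.clm_apply differentiable_id)) ?_ hv
      filter_upwards [h] with u hu
      obtain ⟨c, hc⟩ := Submodule.mem_span_singleton.1 hu
      refine Submodule.mem_span_singleton.2 ⟨c, ?_⟩
      rw [Function.comp_apply, id, ← hc, map_smul, hA.inverse_apply_self]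
  obtain ⟨l, hl⟩ := exists_dual_of_quadraticMap_mem_span hspan
  refine ⟨LinearMap.toContinuousLinearMap l, fun v ↦ hA.inverse.injective ?_⟩
  rw [map_smul, hA.inverse_apply_self]
  exact hl v

end Projective

section PolarHyperplanes

variable {E E' : Type*} [NormedAddCommGroup E] [InnerProductSpace ℂ E] [NormedAddCommGroup E']
  [InnerProductSpace ℂ E'] {F : E → E'} {B : Set E} {p v w z : E}

theorem exists_eventually_exists_polar (hdim : 1 < Module.rank ℂ E) (hp : ‖p‖ = 1) {ε : ℝ}
    (hε : 0 < ε) : ∃ v₀ : E, v₀ ≠ 0 ∧ ‖v₀‖ < ε ∧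
      ∀ᶠ v in 𝓝 v₀, ∃ w ∈ ball p ε, ⟪p, w⟫_ℂ = 1 ∧ ⟪v, w⟫_ℂ = 0 := by
  obtain ⟨v₀, hv₀, hpv₀, hv₀ε⟩ : ∃ v₀ : E, v₀ ≠ 0 ∧ ⟪p, v₀⟫_ℂ = 0 ∧ ‖v₀‖ < ε := by
    obtain ⟨v, hv, hpv⟩ := exists_ne_zero_inner_eq_zero hdim p
    obtain ⟨t, ht, htε⟩ := NormedField.exists_norm_lt ℂ (div_pos hε (norm_pos_iff.2 hv))
    refine ⟨t • v, smul_ne_zero (norm_pos_iff.1 ht) hv, ?_, ?_⟩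
    · rw [inner_smul_right, hpv, mul_zero]
    · rwa [norm_smul, ← lt_div_iff₀ (norm_pos_iff.2 hv)]
  refine ⟨v₀, hv₀, hv₀ε, ?_⟩
  have hne : ⟪v₀, v₀⟫_ℂ ≠ 0 := inner_self_ne_zero.2 hv₀
  have hcont : ∀ a : E, ContinuousAt (fun v : E ↦ ⟪v, a⟫_ℂ) v₀ := fun a ↦ by fun_prop
  have hpolar : ContinuousAt (fun v : E ↦ p - (⟪v, p⟫_ℂ / ⟪v, v₀⟫_ℂ) • v₀) v₀ :=
    continuousAt_const.sub (((hcont p).div₀ (hcont v₀) hne).smul continuousAt_const)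
  have hball : ball p ε ∈ 𝓝 (p - (⟪v₀, p⟫_ℂ / ⟪v₀, v₀⟫_ℂ) • v₀) := by
    rw [inner_eq_zero_symm.1 hpv₀, zero_div, zero_smul, sub_zero]
    exact ball_mem_nhds p hε
  filter_upwards [hpolar.eventually hball, (hcont v₀).eventually_ne hne] with v hv hv0
  refine ⟨_, hv, ?_, ?_⟩
  · rw [inner_sub_right, inner_smul_right, hpv₀, mul_zero, sub_zero, inner_self_eq_one hp]
  · rw [inner_sub_right, inner_smul_right, div_mul_cancel₀ _ hv0, sub_self]

variable [CompleteSpace E] [CompleteSpace E']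

theorem PreservesPolarity.inner_inverse_smul_eq_adjoint (hF : PreservesPolarity F B)
    (hB : B ∈ 𝓝 w) (hd : DifferentiableAt ℂ F w) (hinv : (fderiv ℂ F w).IsInvertible) (hz : z ∈ B)
    (hzw : ⟪z, w⟫_ℂ = 1) :
    ⟪(fderiv ℂ F w).inverse (F w), z⟫_ℂ • F z
      = ContinuousLinearMap.adjoint (fderiv ℂ F w).inverse z := by
  have hnormal := hF.inner_fderiv hB hd hz hzw ((fderiv ℂ F w).inverse (F w))
  rw [hinv.self_apply_inverse, hF z hz w (mem_of_mem_nhds hB) hzw] at hnormal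
  refine ext_inner_right ℂ fun y ↦ ?_
  obtain ⟨u, rfl⟩ := hinv.surjective y
  rw [inner_smul_left, inner_conj_symm, hF.inner_fderiv hB hd hz hzw,
    ContinuousLinearMap.adjoint_inner_left, hinv.inverse_apply_self]
  linear_combination -⟪z, u⟫_ℂ * hnormal

theorem PreservesPolarity.inner_inverse_ne_zero (hF : PreservesPolarity F B)
    (hB : B ∈ 𝓝 w) (hd : DifferentiableAt ℂ F w) (hinv : (fderiv ℂ F w).IsInvertible) (hz : z ∈ B)
    (hzw : ⟪z, w⟫_ℂ = 1) : ⟪(fderiv ℂ F w).inverse (F w), z⟫_ℂ ≠ 0 := by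
  intro h
  have hzero := hF.inner_inverse_smul_eq_adjoint hB hd hinv hz hzw
  rw [h, zero_smul] at hzero
  have hone := ContinuousLinearMap.adjoint_inner_left (fderiv ℂ F w).inverse (fderiv ℂ F w w) z
  rw [← hzero, hinv.inverse_apply_self, hzw, inner_zero_left] at hone
  exact zero_ne_one hone

/-- The formula of `PreservesPolarity.inner_inverse_smul_eq_adjoint` exhibits `F` as a projective
map on the polar hyperplane of `w`. -/
theorem PreservesPolarity.exists_projective_on_line (hF : PreservesPolarity F B)
    (hB : B ∈ 𝓝 w) (hd : DifferentiableAt ℂ F w) (hinv : (fderiv ℂ F w).IsInvertible) (hp : p ∈ B)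
    (hpw : ⟪p, w⟫_ℂ = 1) (hvw : ⟪v, w⟫_ℂ = 0) :
    ∃ (c : ℂ) (x : E'), ∀ t : ℂ, p + t • v ∈ B → (1 + t * c) • (F (p + t • v) - F p) = t • x := by
  set b : E := (fderiv ℂ F w).inverse (F w)
  set M : E →L[ℂ] E' := ContinuousLinearMap.adjoint (fderiv ℂ F w).inverse
  have hM : ∀ z ∈ B, ⟪z, w⟫_ℂ = 1 → ⟪b, z⟫_ℂ • F z = M z := fun z hz hzw ↦
    hF.inner_inverse_smul_eq_adjoint hB hd hinv hz hzw
  have hbp : ⟪b, p⟫_ℂ ≠ 0 := hF.inner_inverse_ne_zero hB hd hinv hp hpw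
  refine ⟨⟪b, v⟫_ℂ / ⟪b, p⟫_ℂ, (⟪b, p⟫_ℂ)⁻¹ • (M v - ⟪b, v⟫_ℂ • F p), fun t ht ↦ ?_⟩
  have hline := hM (p + t • v) ht
    (by rw [inner_add_left, inner_smul_left, hvw, mul_zero, add_zero, hpw])
  rw [map_add, map_smul, ← hM p hp hpw, inner_add_right, inner_smul_right] at hline
  refine smul_right_injective E' hbp ?_
  simp only
  rw [smul_comm _ t, smul_inv_smul₀ hbp, smul_smul, mul_add, mul_left_comm, mul_div_cancel₀ _ hbp]
  linear_combination (norm := module) hline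

end PolarHyperplanes

section ProjectiveFormula

variable {E E' : Type*} [NormedAddCommGroup E] [InnerProductSpace ℂ E] [FiniteDimensional ℂ E]
  [NormedAddCommGroup E'] [InnerProductSpace ℂ E'] [FiniteDimensional ℂ E'] {F : E → E'}
  {p : E} {ε : ℝ}

theorem PreservesPolarity.exists_fderiv_formula_of_polar {B : Set E} {v w : E}
    (hF : PreservesPolarity F B) (hB : IsOpen B) (hd : DifferentiableOn ℂ F B) (hp : p ∈ B)
    (hw : w ∈ B) (hinv : (fderiv ℂ F w).IsInvertible) (hpw : ⟪p, w⟫_ℂ = 1) (hvw : ⟪v, w⟫_ℂ = 0) :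
    ∃ c : ℂ, fderiv ℂ (fderiv ℂ F) p v v = (-2 * c) • fderiv ℂ F p v ∧
      ∀ t : ℂ, p + t • v ∈ B → (1 + t * c) • (F (p + t • v) - F p) = t • fderiv ℂ F p v := by
  have : CompleteSpace E := FiniteDimensional.complete ℂ E
  have : CompleteSpace E' := FiniteDimensional.complete ℂ E'
  have hd' : ∀ z ∈ B, DifferentiableAt ℂ F z := fun z hz ↦ hd.differentiableAt (hB.mem_nhds hz)
  obtain ⟨c, x, hx⟩ :=
    hF.exists_projective_on_line (hB.mem_nhds hw) (hd' w hw) hinv hp hpw hvw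
  have hev : ∀ᶠ t : ℂ in 𝓝 0, (1 + t * c) • (F (p + t • v) - F p) = t • x :=
    ((tendsto_add_smul_zero p v).eventually (hB.mem_nhds hp)).mono hx
  have hdev : ∀ᶠ z in 𝓝 p, DifferentiableAt ℂ F z := (hB.eventually_mem hp).mono hd'
  obtain rfl := fderiv_apply_of_projective hdev hev
  exact ⟨c, fderiv_fderiv_apply_of_projective hdev
    ((differentiableOn_fderiv hB hd).differentiableAt (hB.mem_nhds hp)) hev, hx⟩

/-- Each line through `p` in a polar hyperplane has its own coefficient; the second derivative
shows that these coefficients depend linearly on the direction. -/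
theorem PreservesPolarity.exists_projective_formula (hF : PreservesPolarity F (ball p ε))
    (hd : DifferentiableOn ℂ F (ball p ε)) (hp : ‖p‖ = 1) (hε : 0 < ε)
    (hdim : 1 < Module.rank ℂ E) (hinv : ∀ w ∈ ball p ε, (fderiv ℂ F w).IsInvertible) :
    ∃ β : E →L[ℂ] ℂ, ∀ v ∈ ball 0 ε, (1 + β v) • (F (p + v) - F p) = fderiv ℂ F p v := by
  have : CompleteSpace E' := FiniteDimensional.complete ℂ E'
  have hpB : p ∈ ball p ε := mem_ball_self hε
  obtain ⟨v₀, hv₀, hv₀ε, hpolar⟩ := exists_eventually_exists_polar hdim hp hε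
  have hv₀B : v₀ ∈ ball 0 ε := mem_ball_zero_iff.2 hv₀ε
  have hcone : ∀ᶠ v in 𝓝 v₀, ∃ c : ℂ,
      fderiv ℂ (fderiv ℂ F) p v v = (-2 * c) • fderiv ℂ F p v ∧
      ∀ t : ℂ, p + t • v ∈ ball p ε →
        (1 + t * c) • (F (p + t • v) - F p) = t • fderiv ℂ F p v := by
    filter_upwards [hpolar] with v ⟨w, hw, hpw, hvw⟩
    exact hF.exists_fderiv_formula_of_polar isOpen_ball hd hpB hw (hinv w hw) hpw hvw
  obtain ⟨l, hl⟩ := exists_dual_of_eventually_mem_span (hinv p hpB)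
    (hcone.mono fun v ⟨c, hc, _⟩ ↦ Submodule.mem_span_singleton.2 ⟨_, hc.symm⟩)
  refine ⟨(-1 / 2 : ℂ) • l, eqOn_of_isPreconnected_of_eventuallyEq isOpen_ball
    (convex_ball 0 ε).isPreconnected ?_ (fderiv ℂ F p).differentiable.differentiableOn hv₀B ?_⟩
  · have hshift : DifferentiableOn ℂ (fun v ↦ F (p + v)) (ball 0 ε) :=
      hd.comp (differentiable_id.const_add p).differentiableOn fun v hv ↦ by simpa using hv
    exact (((-1 / 2 : ℂ) • l).differentiable.const_add 1).differentiableOn.smul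
      (hshift.sub_const (F p))
  · filter_upwards [hcone, isOpen_ball.mem_nhds hv₀B, isOpen_ne.mem_nhds hv₀]
      with v ⟨c, hc, hline⟩ hv hv0
    have hlv : l v = -2 * c := by
      refine smul_left_injective ℂ (fun h ↦ hv0 ?_) ((hl v).symm.trans hc)
      exact (hinv p hpB).injective (h.trans (map_zero _).symm)
    have hβ : 1 + ((-1 / 2 : ℂ) • l) v = 1 + 1 * c := by
      rw [smul_apply, hlv, smul_eq_mul]
      ring
    simpa only [hβ, one_smul] using hline 1 (by simpa using hv)

end ProjectiveFormula

section FormIdentity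

variable {E E' : Type*} [NormedAddCommGroup E] [InnerProductSpace ℂ E]
  [NormedAddCommGroup E'] [InnerProductSpace ℂ E'] {F : E → E'} {p : E} {ε α : ℝ} {β : E →L[ℂ] ℂ}

theorem PreservesPolarity.inner_fderiv_eq_of_projective_formula
    (hF : PreservesPolarity F (ball p ε)) (hp : ‖p‖ = 1) (hε : 0 < ε)
    (hd : DifferentiableAt ℂ F p) (hα : ⟪F p, fderiv ℂ F p p⟫_ℂ = α)
    (hβ : ∀ v ∈ ball 0 ε, (1 + β v) • (F (p + v) - F p) = fderiv ℂ F p v) {u v : E}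
    (hu : u ∈ ball 0 ε) (hv : v ∈ ball 0 ε) (huv : ⟪p, v⟫_ℂ + ⟪u, p⟫_ℂ + ⟪u, v⟫_ℂ = 0) :
    ⟪fderiv ℂ F p u, fderiv ℂ F p v⟫_ℂ
      = -(conj (1 + β u) * (α * ⟪p, v⟫_ℂ) + (1 + β v) * (α * ⟪u, p⟫_ℂ)) := by
  have hpB : p ∈ ball p ε := mem_ball_self hε
  have hpp : ⟪p, p⟫_ℂ = 1 := inner_self_eq_one hp
  have hnormal : ∀ a, ⟪F p, fderiv ℂ F p a⟫_ℂ = α * ⟪p, a⟫_ℂ := fun a ↦ by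
    rw [hF.inner_fderiv (ball_mem_nhds p hε) hd hpB hpp, hα, mul_comm]
  have hnormal' : ∀ a, ⟪fderiv ℂ F p a, F p⟫_ℂ = α * ⟪a, p⟫_ℂ := fun a ↦ by
    rw [← inner_conj_symm, hnormal, map_mul, inner_conj_symm, Complex.conj_ofReal]
  have hmem : ∀ {a}, a ∈ ball 0 ε → p + a ∈ ball p ε := fun ha ↦ by simpa using ha
  have hpolar : ⟪F (p + u), F (p + v)⟫_ℂ = 1 := by
    refine hF _ (hmem hu) _ (hmem hv) ?_
    rw [inner_add_left, inner_add_right, inner_add_right, hpp]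
    linear_combination huv
  have hsmul : ∀ a ∈ ball 0 ε, (1 + β a) • F (p + a) = (1 + β a) • F p + fderiv ℂ F p a := by
    intro a ha
    rw [← hβ a ha, smul_sub, add_sub_cancel]
  have h : ⟪(1 + β u) • F (p + u), (1 + β v) • F (p + v)⟫_ℂ = conj (1 + β u) * (1 + β v) := by
    rw [inner_smul_left, inner_smul_right, hpolar, mul_one]
  rw [hsmul u hu, hsmul v hv, inner_add_left, inner_add_right, inner_add_right, inner_smul_left,
    inner_smul_left, inner_smul_right, inner_smul_right, hF p hpB p hpB hpp, hnormal,
    hnormal'] at h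
  linear_combination h

/-- When `‖p‖ = 1`, the final equation says that `p + conj r • a` and `p + s • a` are polar. -/
theorem exists_smul_polar {p a : E} {ε : ℝ} (hε : 0 < ε) (ha : ⟪p, a⟫_ℂ ≠ 0) :
    ∃ r s : ℂ, s ≠ 0 ∧ conj r • a ∈ ball 0 ε ∧ s • a ∈ ball 0 ε ∧
      s * ⟪p, a⟫_ℂ + r * (⟪a, p⟫_ℂ + s * ⟪a, a⟫_ℂ) = 0 := by
  have hap : ⟪a, p⟫_ℂ + 0 * ⟪a, a⟫_ℂ ≠ 0 := by
    rw [zero_mul, add_zero]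
    exact fun h ↦ ha (inner_eq_zero_symm.1 h)
  have hdenom : ContinuousAt (fun s : ℂ ↦ ⟪a, p⟫_ℂ + s * ⟪a, a⟫_ℂ) 0 := by fun_prop
  have hr : ContinuousAt
      (fun s : ℂ ↦ conj (-(s * ⟪p, a⟫_ℂ) / (⟪a, p⟫_ℂ + s * ⟪a, a⟫_ℂ)) • a) 0 :=
    (Complex.continuous_conj.continuousAt.comp
      (ContinuousAt.div₀ (by fun_prop) hdenom hap)).smul continuousAt_const
  have hs : ContinuousAt (fun s : ℂ ↦ s • a) 0 := by fun_prop
  have hball : ∀ {f : ℂ → E}, ContinuousAt f 0 → f 0 = 0 → ∀ᶠ s in 𝓝 0, f s ∈ ball 0 ε :=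
    fun hf h0 ↦ hf.eventually (h0.symm ▸ ball_mem_nhds 0 hε)
  have hev := ((hball hr (by simp)).and (hball hs (by simp))).and (hdenom.eventually_ne hap)
  obtain ⟨s, ⟨⟨hrε, hsε⟩, hne⟩, hs0⟩ := ((hev.filter_mono nhdsWithin_le_nhds).and
    (eventually_mem_nhdsWithin (a := (0 : ℂ)) (s := {0}ᶜ))).exists
  exact ⟨_, s, hs0, hrε, hsε, by rw [div_mul_cancel₀ _ hne, add_neg_cancel]⟩

theorem PreservesPolarity.inner_fderiv_self_of_projective_formula
    (hF : PreservesPolarity F (ball p ε)) (hp : ‖p‖ = 1) (hε : 0 < ε)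
    (hd : DifferentiableAt ℂ F p) (hα : ⟪F p, fderiv ℂ F p p⟫_ℂ = α)
    (hβ : ∀ v ∈ ball 0 ε, (1 + β v) • (F (p + v) - F p) = fderiv ℂ F p v) (v : E) :
    ⟪fderiv ℂ F p v, fderiv ℂ F p v⟫_ℂ
      = α * (⟪v, v⟫_ℂ - conj (β v) * ⟪p, v⟫_ℂ - β v * ⟪v, p⟫_ℂ) := by
  by_cases hpv : ⟪p, v⟫_ℂ = 0
  · rw [hF.inner_fderiv_fderiv (ball_mem_nhds p hε) hd hp hpv hpv, hα, hpv,
      inner_eq_zero_symm.1 hpv]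
    ring
  obtain ⟨r, s, hs0, hr, hs, hrs⟩ := exists_smul_polar hε hpv
  have h := hF.inner_fderiv_eq_of_projective_formula hp hε hd hα hβ hr hs (by
    rw [inner_smul_left, inner_smul_left, inner_smul_right, inner_smul_right, Complex.conj_conj]
    linear_combination hrs)
  simp only [map_smul, inner_smul_left, inner_smul_right, smul_eq_mul, map_add, map_one, map_mul,
    Complex.conj_conj] at h
  refine mul_left_cancel₀ (mul_ne_zero hs0 (mul_ne_zero hs0 hpv)) ?_
  linear_combination (s * ⟪fderiv ℂ F p v, fderiv ℂ F p v⟫_ℂ + α * (⟪v, p⟫_ℂ + s * ⟪v, v⟫_ℂ)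
    - s * α * (⟪v, v⟫_ℂ - conj (β v) * ⟪p, v⟫_ℂ - β v * ⟪v, p⟫_ℂ)) * hrs
    - (⟪v, p⟫_ℂ + s * ⟪v, v⟫_ℂ) * h

end FormIdentity

/-! ### Automorphisms of the unit ball -/

section ProjectiveMap

variable {E : Type*} [NormedAddCommGroup E] [InnerProductSpace ℂ E]

/-- The Lorentzian form on `ℂ × E`, positive at `(1, z)` exactly when `z` lies in the unit ball. -/
def lorentzForm (x : ℂ × E) : ℝ := ‖x.1‖ ^ 2 - ‖x.2‖ ^ 2

/-- The map induced on the affine chart `t = 1` by a linear automorphism of `ℂ × E`. -/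
def projectiveMap (T : (ℂ × E) ≃ₗ[ℂ] (ℂ × E)) (z : E) : E := (T (1, z)).1⁻¹ • (T (1, z)).2

variable {T : (ℂ × E) ≃ₗ[ℂ] (ℂ × E)} {α : ℝ} {z : E}

theorem norm_snd_lt_norm_fst_of_lorentzForm (hα : 0 < α)
    (hT : ∀ x, lorentzForm (T x) = α * lorentzForm x) (hz : z ∈ ball (0 : E) 1) :
    ‖(T (1, z)).2‖ < ‖(T (1, z)).1‖ := by
  have hpos : 0 < lorentzForm ((1 : ℂ), z) := by
    rw [lorentzForm, norm_one, sub_pos]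
    exact pow_lt_pow_left₀ (mem_ball_zero_iff.1 hz) (norm_nonneg z) two_ne_zero
  have h : 0 < lorentzForm (T (1, z)) := hT _ ▸ mul_pos hα hpos
  exact lt_of_pow_lt_pow_left₀ 2 (norm_nonneg _) (sub_pos.1 h)

theorem projectiveMap_denom_ne_zero (hα : 0 < α)
    (hT : ∀ x, lorentzForm (T x) = α * lorentzForm x) (hz : z ∈ ball (0 : E) 1) :
    (T (1, z)).1 ≠ 0 :=
  norm_pos_iff.1 ((norm_nonneg _).trans_lt (norm_snd_lt_norm_fst_of_lorentzForm hα hT hz))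

theorem mapsTo_projectiveMap_ball (hα : 0 < α) (hT : ∀ x, lorentzForm (T x) = α * lorentzForm x) :
    MapsTo (projectiveMap T) (ball 0 1) (ball 0 1) := by
  intro z hz
  have h := norm_snd_lt_norm_fst_of_lorentzForm hα hT hz
  rwa [mem_ball_zero_iff, projectiveMap, norm_smul, norm_inv, inv_mul_eq_div,
    div_lt_one ((norm_nonneg _).trans_lt h)]

theorem leftInvOn_projectiveMap_symm (hα : 0 < α)
    (hT : ∀ x, lorentzForm (T x) = α * lorentzForm x) :
    LeftInvOn (projectiveMap T.symm) (projectiveMap T) (ball 0 1) := by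
  intro z hz
  have hd := projectiveMap_denom_ne_zero hα hT hz
  have h : ((1 : ℂ), projectiveMap T z) = (T (1, z)).1⁻¹ • T (1, z) :=
    Prod.ext (inv_mul_cancel₀ hd).symm rfl
  rw [projectiveMap, h, map_smul, T.symm_apply_apply]
  simp [smul_smul, hd]

theorem differentiableOn_projectiveMap [FiniteDimensional ℂ E] (hα : 0 < α)
    (hT : ∀ x, lorentzForm (T x) = α * lorentzForm x) :
    DifferentiableOn ℂ (projectiveMap T) (ball 0 1) := by
  have hd : Differentiable ℂ fun z : E ↦ T (1, z) :=
    T.toLinearMap.toContinuousLinearMap.differentiable.comp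
      ((differentiable_const (1 : ℂ)).prodMk differentiable_id)
  exact (hd.fst.differentiableOn.inv fun z hz ↦ projectiveMap_denom_ne_zero hα hT hz).smul
    hd.snd.differentiableOn

theorem biholo_projectiveMap [FiniteDimensional ℂ E] (hα : 0 < α)
    (hT : ∀ x, lorentzForm (T x) = α * lorentzForm x) :
    Biholo (projectiveMap T) (ball (0 : E) 1) (ball (0 : E) 1) := by
  have hα' : 0 < α⁻¹ := inv_pos.2 hα
  have hT' : ∀ x, lorentzForm (T.symm x) = α⁻¹ * lorentzForm x := fun x ↦ by
    rw [eq_inv_mul_iff_mul_eq₀ hα.ne', ← hT, T.apply_symm_apply]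
  exact ⟨differentiableOn_projectiveMap hα hT, mapsTo_projectiveMap_ball hα hT,
    projectiveMap T.symm, differentiableOn_projectiveMap hα' hT',
    mapsTo_projectiveMap_ball hα' hT', leftInvOn_projectiveMap_symm hα hT,
    leftInvOn_projectiveMap_symm (T := T.symm) hα' hT'⟩

theorem ofReal_lorentzForm (x : ℂ × E) :
    (lorentzForm x : ℂ) = conj x.1 * x.1 - ⟪x.2, x.2⟫_ℂ := by
  rw [lorentzForm, Complex.conj_mul', inner_self_eq_norm_sq_to_K]
  push_cast
  rfl

end ProjectiveMap

section Homogenization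

variable {E : Type*} [NormedAddCommGroup E] [InnerProductSpace ℂ E] [FiniteDimensional ℂ E]

/-- The linear automorphism of `ℂ × E` inducing `p + v ↦ q + (1 + β v)⁻¹ • A v` in the chart
`t = 1`. -/
def homogenization (p q : E) (A : E →L[ℂ] E) (hA : Function.Injective A) (β : E →L[ℂ] ℂ) :
    (ℂ × E) ≃ₗ[ℂ] (ℂ × E) :=
  let y : (ℂ × E) →ₗ[ℂ] E := LinearMap.snd ℂ ℂ E - (LinearMap.fst ℂ ℂ E).smulRight p
  let d : (ℂ × E) →ₗ[ℂ] ℂ := LinearMap.fst ℂ ℂ E + β.toLinearMap.comp y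
  LinearEquiv.ofInjectiveEndo (d.prod (d.smulRight q + A.toLinearMap.comp y)) <| by
    refine (injective_iff_map_eq_zero _).2 fun x hx ↦ ?_
    have hd : d x = 0 := congrArg Prod.fst hx
    have hA0 : d x • q + A (y x) = 0 := congrArg Prod.snd hx
    rw [hd, zero_smul, zero_add] at hA0
    have hy : y x = 0 := hA (hA0.trans (map_zero A).symm)
    have hfst : x.1 + β (y x) = 0 := hd
    rw [hy, map_zero, add_zero] at hfst
    have hsnd : x.2 - x.1 • p = 0 := hy
    rw [hfst, zero_smul, sub_zero] at hsnd
    exact Prod.ext hfst hsnd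

variable {p q : E} {A : E →L[ℂ] E} {β : E →L[ℂ] ℂ}

theorem homogenization_apply_add (hA : Function.Injective A) (t : ℂ) (v : E) :
    homogenization p q A hA β (t, t • p + v) = (t + β v, (t + β v) • q + A v) := by
  change (t + β (t • p + v - t • p), (t + β (t • p + v - t • p)) • q + A (t • p + v - t • p)) = _
  rw [add_sub_cancel_left]

theorem lorentzForm_homogenization (hA : Function.Injective A) {α : ℝ} (hp : ‖p‖ = 1)
    (hq : ‖q‖ = 1) (hqA : ∀ v, ⟪q, A v⟫_ℂ = α * ⟪p, v⟫_ℂ)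
    (hAA : ∀ v, ⟪A v, A v⟫_ℂ = α * (⟪v, v⟫_ℂ - conj (β v) * ⟪p, v⟫_ℂ - β v * ⟪v, p⟫_ℂ))
    (x : ℂ × E) : lorentzForm (homogenization p q A hA β x) = α * lorentzForm x := by
  obtain ⟨t, z⟩ := x
  obtain ⟨v, rfl⟩ : ∃ v, t • p + v = z := ⟨z - t • p, add_sub_cancel _ _⟩
  have hAq : ⟪A v, q⟫_ℂ = α * ⟪v, p⟫_ℂ := by
    rw [← inner_conj_symm, hqA, map_mul, inner_conj_symm, Complex.conj_ofReal]
  rw [← Complex.ofReal_inj, Complex.ofReal_mul, homogenization_apply_add, ofReal_lorentzForm,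
    ofReal_lorentzForm]
  simp only [inner_add_left, inner_add_right, inner_smul_left, inner_smul_right, map_add,
    inner_self_eq_one hp, inner_self_eq_one hq, hqA, hAq, hAA]
  ring

theorem homogenization_one_apply (hA : Function.Injective A) (z : E) :
    homogenization p q A hA β (1, z)
      = (1 + β (z - p), (1 + β (z - p)) • q + A (z - p)) := by
  simpa using homogenization_apply_add (p := p) (q := q) (β := β) hA 1 (z - p)

theorem projectiveMap_homogenization (hA : Function.Injective A) {z w : E}
    (h0 : 1 + β (z - p) ≠ 0) (h : (1 + β (z - p)) • (w - q) = A (z - p)) :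
    projectiveMap (homogenization p q A hA β) z = w := by
  rw [projectiveMap, homogenization_one_apply, ← h, ← smul_add, add_sub_cancel,
    inv_smul_smul₀ h0]

end Homogenization

section Extension

variable {E : Type*} [NormedAddCommGroup E] [InnerProductSpace ℂ E] [FiniteDimensional ℂ E]
  {F : E → E} {U : Set E} {p : E} {ε : ℝ}

theorem PreservesPolarity.exists_biholo_eqOn (hF : PreservesPolarity F (ball p ε))
    (hd : DifferentiableOn ℂ F (ball p ε)) (hp : ‖p‖ = 1) (hε : 0 < ε)
    (hdim : 1 < Module.rank ℂ E) (hFp : ‖F p‖ = 1) (h0 : ⟪F p, fderiv ℂ F p p⟫_ℂ ≠ 0)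
    (hinv : ∀ w ∈ ball p ε, (fderiv ℂ F w).IsInvertible) :
    ∃ G : E → E, Biholo G (ball 0 1) (ball 0 1) ∧ EqOn F G (ball p ε ∩ ball 0 1) := by
  have hpB : ball p ε ∈ 𝓝 p := ball_mem_nhds p hε
  have hdp : DifferentiableAt ℂ F p := hd.differentiableAt hpB
  obtain ⟨α, hα0, hα⟩ := hF.exists_pos_inner_fderiv hpB hdp hp hdim h0
  obtain ⟨β, hβ⟩ := hF.exists_projective_formula hd hp hε hdim hinv
  have hA : Function.Injective (fderiv ℂ F p) := (hinv p (mem_ball_self hε)).injective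
  have hT : ∀ x, lorentzForm (homogenization p (F p) _ hA β x) = α * lorentzForm x :=
    lorentzForm_homogenization hA hp hFp
      (fun v ↦ by
        rw [hF.inner_fderiv hpB hdp (mem_ball_self hε) (inner_self_eq_one hp), hα, mul_comm])
      (hF.inner_fderiv_self_of_projective_formula hp hε hdp hα hβ)
  refine ⟨_, biholo_projectiveMap hα0 hT, fun z ⟨hzp, hz⟩ ↦ ?_⟩
  have hdenom := projectiveMap_denom_ne_zero hα0 hT hz
  rw [homogenization_one_apply] at hdenom
  have hformula := hβ (z - p) (by rwa [mem_ball_zero_iff, ← dist_eq_norm])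
  rw [add_sub_cancel] at hformula
  exact (projectiveMap_homogenization hA hdenom hformula).symm

theorem exists_biholo_eventually_eq (hdim : 1 < Module.rank ℂ E) (hU : IsOpen U) (hpU : p ∈ U)
    (hp : ‖p‖ = 1) (hF : DifferentiableOn ℂ F U) (hS : ∀ z ∈ U, ‖z‖ = 1 → ‖F z‖ = 1)
    (h0 : ⟪F p, fderiv ℂ F p p⟫_ℂ ≠ 0) :
    ∃ G : E → E, Biholo G (ball 0 1) (ball 0 1) ∧ ∀ᶠ z in 𝓝 p, z ∈ ball 0 1 → F z = G z := by
  obtain ⟨δ, hδ, hpolar⟩ := exists_preservesPolarity hU hpU hp hF hS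
  have hinj := hpolar.injective_fderiv (ball_mem_nhds p hδ)
    (hF.differentiableAt (hU.mem_nhds hpU)) hp h0
  obtain ⟨ε, hε, hball⟩ := Metric.eventually_nhds_iff_ball.1
    (((isOpen_ball.eventually_mem (mem_ball_self hδ)).and (hU.eventually_mem hpU)).and
      (eventually_isInvertible_fderiv hU hpU hF hinj))
  obtain ⟨G, hG, hFG⟩ := (hpolar.mono fun z hz ↦ (hball z hz).1.1).exists_biholo_eqOn
    (hF.mono fun z hz ↦ (hball z hz).1.2) hp hε hdim (hS p hpU hp) h0 fun z hz ↦ (hball z hz).2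
  exact ⟨G, hG, mem_of_superset (ball_mem_nhds p hε) fun z hz hz1 ↦ hFG ⟨hz, hz1⟩⟩

end Extension

theorem poincare_tanaka_alexander_general {E : Type*} [NormedAddCommGroup E]
    [InnerProductSpace ℂ E] [FiniteDimensional ℂ E] (hdim : 1 < Module.rank ℂ E) {U : Set E}
    (hU : IsOpen U) (hc : IsPreconnected U) (hUS : (U ∩ sphere 0 1).Nonempty) {F : E → E}
    (hF : DifferentiableOn ℂ F U) (hFnc : ¬ ∃ c, EqOn F (fun _ ↦ c) U)
    (hFS : MapsTo F (U ∩ sphere 0 1) (sphere 0 1)) :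
    ∃ G : E → E, Biholo G (ball 0 1) (ball 0 1) ∧
      ∃ V : Set E, IsOpen V ∧ V.Nonempty ∧ V ⊆ U ∩ ball 0 1 ∧ EqOn F G V := by
  have hS : ∀ z ∈ U, ‖z‖ = 1 → ‖F z‖ = 1 := fun z hz hz1 ↦
    mem_sphere_zero_iff_norm.1 (hFS ⟨hz, mem_sphere_zero_iff_norm.2 hz1⟩)
  obtain ⟨p₀, hp₀U, hp₀⟩ := hUS
  obtain ⟨p, hpU, hp, h0⟩ := exists_inner_fderiv_ne_zero hdim hU hc hp₀U
    (mem_sphere_zero_iff_norm.1 hp₀) hF hFnc hS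
  obtain ⟨G, hG, hFG⟩ := exists_biholo_eventually_eq hdim hU hpU hp hF hS h0
  obtain ⟨ε, hε, hball⟩ := Metric.eventually_nhds_iff_ball.1 ((hU.eventually_mem hpU).and hFG)
  have hcl : p ∈ closure (ball (0 : E) 1) := by
    rw [closure_ball _ one_ne_zero]
    exact mem_closedBall_zero_iff.2 hp.le
  exact ⟨G, hG, ball p ε ∩ ball 0 1, isOpen_ball.inter isOpen_ball,
    mem_closure_iff.1 hcl _ isOpen_ball (mem_ball_self hε),
    fun z hz ↦ ⟨(hball z hz.1).1, hz.2⟩, fun z hz ↦ (hball z hz.1).2 hz.2⟩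

/-- **Poincaré–Tanaka–Alexander theorem.** A nonconstant holomorphic map on a connected
open set `U` meeting the unit sphere of `ℂ^m` (`m ≥ 2`) which sends `U ∩ S` into `S`
coincides, on a nonempty open subset of `U ∩ 𝔹`, with an automorphism of the unit ball. -/
theorem poincare_tanaka_alexander (m : ℕ) (hm : 2 ≤ m)
    (U : Set (EuclideanSpace ℂ (Fin m))) (hUopen : IsOpen U) (hUconn : IsConnected U)
    (hUS : (U ∩ sphere (0 : EuclideanSpace ℂ (Fin m)) 1).Nonempty)
    (F : EuclideanSpace ℂ (Fin m) → EuclideanSpace ℂ (Fin m))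
    (hF : DifferentiableOn ℂ F U)
    (hFnc : ¬ ∃ c, Set.EqOn F (fun _ => c) U)
    (hFS : Set.MapsTo F (U ∩ sphere (0 : EuclideanSpace ℂ (Fin m)) 1)
      (sphere (0 : EuclideanSpace ℂ (Fin m)) 1)) :
    ∃ G : EuclideanSpace ℂ (Fin m) → EuclideanSpace ℂ (Fin m),
      Biholo G (ball (0 : EuclideanSpace ℂ (Fin m)) 1) (ball (0 : EuclideanSpace ℂ (Fin m)) 1) ∧
      ∃ V : Set (EuclideanSpace ℂ (Fin m)), IsOpen V ∧ V.Nonempty ∧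
        V ⊆ U ∩ ball (0 : EuclideanSpace ℂ (Fin m)) 1 ∧ Set.EqOn F G V := by
  have hdim : 1 < Module.rank ℂ (EuclideanSpace ℂ (Fin m)) :=
    Module.lt_rank_of_lt_finrank (by rwa [finrank_euclideanSpace_fin])
  exact poincare_tanaka_alexander_general hdim hUopen hUconn.isPreconnected hUS hF hFnc hFS
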